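/- Let ρ > 0 and suppose the restricted problem with bounds [q^min + ρ·1, q^max − ρ·1] and [v^min + ρ·1, v^max − ρ·1] is feasible. Run the VC-LB iteration for the restricted problem (i.e., with q^min, q^max, v^min, v^max replaced by q^min + ρ·1, q^max − ρ·1, v^min + ρ·1, v^max − ρ·1 in the definition of ∇D) with step sizes α = 1/L and β = ρ/(4 N^{3/2} L). Then there exists T ∈ ℕ with T ≤ ⌈ 16 N³ L Q λ_max(A) / ρ² ⌉, where Q = max{ (q^min_i)², (q^max_i)² : i = 1,…,N } and λ_max(A) is the largest eigenvalue of A, such that q(z(T)) is an exact solution of the original voltage regulation problem: q^min ≤ q(z(T)) ≤ q^max and v^min ≤ v(q(z(T))) ≤ v^max, i.e., fes(q(z(T))) = 0. -/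

import Mathlib

open Matrix

noncomputable section

/-- Euclidean norm of a vector in ℝ^{4N}, represented as four blocks of ℝ^N. -/
def enorm4 {N : ℕ} (w : Fin 4 → Fin N → ℝ) : ℝ :=
  Real.sqrt (∑ b, ∑ i, w b i ^ 2)

/-- sign(x) = 1 if x ≥ 0 and −1 if x < 0. -/
def sgn (x : ℝ) : ℝ := if 0 ≤ x then 1 else -1

/-- The (linearized) voltage map v(q) = A q + d. -/
def volt {N : ℕ} (A : Matrix (Fin N) (Fin N) ℝ) (d : Fin N → ℝ) (q : Fin N → ℝ) :
    Fin N → ℝ :=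
  A *ᵥ q + d

/-- q(z) = λ^min − λ^max + A⁻¹(μ^min − μ^max). -/
def qOf {N : ℕ} (A : Matrix (Fin N) (Fin N) ℝ) (z : Fin 4 → Fin N → ℝ) : Fin N → ℝ :=
  z 0 - z 1 + A⁻¹ *ᵥ (z 2 - z 3)

/-- ∇D(z) = (v^min − v(q(z)), v(q(z)) − v^max, q^min − q(z), q(z) − q^max). -/
def gradD {N : ℕ} (A : Matrix (Fin N) (Fin N) ℝ) (d vmin vmax qmin qmax : Fin N → ℝ)
    (z : Fin 4 → Fin N → ℝ) : Fin 4 → Fin N → ℝ :=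
  ![vmin - volt A d (qOf A z), volt A d (qOf A z) - vmax,
    qmin - qOf A z, qOf A z - qmax]

/-- V(z) = ‖z − ⌈z + ∇D(z)⌉₊‖. -/
def Vfun {N : ℕ} (A : Matrix (Fin N) (Fin N) ℝ) (d vmin vmax qmin qmax : Fin N → ℝ)
    (z : Fin 4 → Fin N → ℝ) : ℝ :=
  enorm4 (fun b i => z b i - max (z b i + gradD A d vmin vmax qmin qmax z b i) 0)

/-- The Lagrangian dual function
D(z) = inf_q [ (1/2) qᵀAq + (λ^min)ᵀ(v^min − v(q)) + (λ^max)ᵀ(v(q) − v^max)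
  + (μ^min)ᵀ(q^min − q) + (μ^max)ᵀ(q − q^max) ]. -/
def dualFun {N : ℕ} (A : Matrix (Fin N) (Fin N) ℝ) (d vmin vmax qmin qmax : Fin N → ℝ)
    (z : Fin 4 → Fin N → ℝ) : ℝ :=
  ⨅ q : Fin N → ℝ,
    ((1 / 2) * (q ⬝ᵥ A *ᵥ q) + (z 0) ⬝ᵥ (vmin - volt A d q)
      + (z 1) ⬝ᵥ (volt A d q - vmax) + (z 2) ⬝ᵥ (qmin - q) + (z 3) ⬝ᵥ (q - qmax))

/-- fes(q) = Euclidean distance from (q, v(q)) to the box [q^min,q^max] × [v^min,v^max]. -/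
def fes {N : ℕ} (A : Matrix (Fin N) (Fin N) ℝ) (d vmin vmax qmin qmax : Fin N → ℝ)
    (q : Fin N → ℝ) : ℝ :=
  sInf { r : ℝ | ∃ y1 y2 : Fin N → ℝ,
    (∀ i, qmin i ≤ y1 i ∧ y1 i ≤ qmax i) ∧ (∀ i, vmin i ≤ y2 i ∧ y2 i ≤ vmax i) ∧
    r = Real.sqrt ((∑ i, (q i - y1 i) ^ 2) + ∑ i, (volt A d q i - y2 i) ^ 2) }

/-!
The dual of minimizing `½ qᵀAq` under the voltage and reactive bounds is a concave quadratic with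
gradient `gradD`, whose Lipschitz constant is at most `L`. In its quadratic lower model a step of
VC-LB splits into coordinates: a projected gradient coordinate never loses, a sign coordinate loses
at most `L β² / 2`, and a coordinate whose constraint is violated by at least `ρ` gains more than
all sign coordinates together can lose. So as long as some restricted constraint is violated by at
least `ρ`, the dual function grows by at least `ρ² / (32 N² L)` per step. By weak duality it never
exceeds `½ qᵀAq ≤ ½ N Q λ_max(A)` for a feasible `q`, which limits the number of such steps; and
once no restricted constraint is violated by more than `ρ`, the original constraints hold.
-/

section Spectral

open Polynomial

lemma dotProduct_mulVec_comm_of_isSymm {R n : Type*} [CommSemiring R] [Fintype n]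
    {A : Matrix n n R} (hA : A.IsSymm) (x y : n → R) : x ⬝ᵥ A *ᵥ y = y ⬝ᵥ A *ᵥ x := by
  rw [dotProduct_mulVec, ← mulVec_transpose, hA.eq, dotProduct_comm]

open scoped MatrixOrder ComplexOrder in
lemma posSemidef_aeval_of_eval_eigenvalues_nonneg {𝕜 n : Type*} [RCLike 𝕜] [Fintype n]
    [DecidableEq n] {A : Matrix n n 𝕜} (hA : A.IsHermitian) {p : ℝ[X]}
    (hp : ∀ i, 0 ≤ p.eval (hA.eigenvalues i)) : (aeval A p).PosSemidef := by
  rw [← nonneg_iff_posSemidef, ← cfc_polynomial p A hA.isSelfAdjoint]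
  refine cfc_nonneg fun x hx => ?_
  obtain ⟨i, rfl⟩ := hA.spectrum_real_eq_range_eigenvalues ▸ hx
  exact hp i

variable {n : Type*} [Fintype n] [DecidableEq n] {A : Matrix n n ℝ}

lemma dotProduct_mulVec_le_of_eigenvalues_le (hA : A.IsHermitian) {m : ℝ}
    (hm : ∀ i, hA.eigenvalues i ≤ m) (w : n → ℝ) : w ⬝ᵥ A *ᵥ w ≤ m * (w ⬝ᵥ w) := by
  have hpsd : (aeval A (C m - X)).PosSemidef :=
    posSemidef_aeval_of_eval_eigenvalues_nonneg hA fun i => by simpa using hm i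
  have hnonneg := hpsd.dotProduct_mulVec_nonneg w
  simp only [star_trivial, map_sub, aeval_C, aeval_X, Algebra.algebraMap_eq_smul_one, sub_mulVec,
    smul_mulVec, one_mulVec, dotProduct_sub, dotProduct_smul, smul_eq_mul] at hnonneg
  linarith

lemma two_mul_dotProduct_self_add_le (hA : A.PosDef) {L : ℝ}
    (hL : ∀ i, 2 * (hA.1.eigenvalues i + (hA.1.eigenvalues i)⁻¹) ≤ L) (w : n → ℝ) :
    2 * ((A *ᵥ w) ⬝ᵥ (A *ᵥ w) + w ⬝ᵥ w) ≤ L * (w ⬝ᵥ A *ᵥ w) := by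
  have hsymm : A.IsSymm := isHermitian_iff_isSymm.1 hA.1
  have hpsd : (aeval A (C L * X - C 2 * (X * X + 1))).PosSemidef := by
    refine posSemidef_aeval_of_eval_eigenvalues_nonneg hA.1 fun i => ?_
    have hpos := hA.eigenvalues_pos i
    have hmul := mul_le_mul_of_nonneg_right (hL i) hpos.le
    rw [mul_assoc, add_mul, inv_mul_cancel₀ hpos.ne'] at hmul
    simpa using hmul
  have hnonneg := hpsd.dotProduct_mulVec_nonneg w
  simp only [star_trivial, map_sub, map_mul, map_add, map_one, aeval_C, aeval_X,
    Algebra.algebraMap_eq_smul_one, smul_one_mul, sub_mulVec, add_mulVec, smul_mulVec, one_mulVec,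
    ← mulVec_mulVec, dotProduct_sub, dotProduct_add, dotProduct_smul, smul_eq_mul,
    dotProduct_mulVec_comm_of_isSymm hsymm w (A *ᵥ w)] at hnonneg
  linarith

lemma dotProduct_mulVec_le_card_mul (hA : A.IsHermitian) {m Q : ℝ}
    (hm : ∀ i, hA.eigenvalues i ≤ m) (hm0 : 0 ≤ m) {w : n → ℝ} (hw : ∀ i, w i ^ 2 ≤ Q) :
    w ⬝ᵥ A *ᵥ w ≤ m * (Fintype.card n * Q) := by
  have hnorm : w ⬝ᵥ w ≤ Fintype.card n * Q := by
    simpa [dotProduct, sq] using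
      Finset.sum_le_card_nsmul Finset.univ (fun i => w i ^ 2) Q fun i _ => hw i
  exact (dotProduct_mulVec_le_of_eigenvalues_le hA hm w).trans
    (mul_le_mul_of_nonneg_left hnorm hm0)

end Spectral

section Dual

open Function

variable {N : ℕ} {A : Matrix (Fin N) (Fin N) ℝ} {d vmin vmax qmin qmax : Fin N → ℝ}

/-- The constraint functions of the voltage regulation problem at the primal point `q`, in the
block order of the dual variables; `q` is feasible when all of them are nonpositive. -/
def constraintResidual (A : Matrix (Fin N) (Fin N) ℝ) (d vmin vmax qmin qmax q : Fin N → ℝ) :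
    Fin 4 → Fin N → ℝ :=
  ![vmin - volt A d q, volt A d q - vmax, qmin - q, q - qmax]

/-- The Lagrangian of minimizing `½ qᵀAq` under the voltage and reactive bounds, whose infimum over
`q` is `dualFun`.  The pairing of dual variables with constraints is a dot product over
`Fin 4 × Fin N`. -/
def lagrangian (A : Matrix (Fin N) (Fin N) ℝ) (d vmin vmax qmin qmax : Fin N → ℝ)
    (z : Fin 4 → Fin N → ℝ) (q : Fin N → ℝ) : ℝ :=
  1 / 2 * (q ⬝ᵥ A *ᵥ q) + uncurry z ⬝ᵥ uncurry (constraintResidual A d vmin vmax qmin qmax q)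

lemma constraintResidual_le_iff {q : Fin N → ℝ} {c : ℝ} :
    (∀ b i, constraintResidual A d vmin vmax qmin qmax q b i ≤ c) ↔
      (∀ i, qmin i - c ≤ q i ∧ q i ≤ qmax i + c) ∧
        ∀ i, vmin i - c ≤ volt A d q i ∧ volt A d q i ≤ vmax i + c := by
  simp only [constraintResidual, Fin.forall_fin_succ, Fin.isValue, cons_val_zero, cons_val_succ,
    Pi.sub_apply, sub_le_iff_le_add, IsEmpty.forall_iff, and_true, forall_and]
  simp only [add_comm c]
  tauto

lemma uncurry_dotProduct_uncurry (z w : Fin 4 → Fin N → ℝ) :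
    uncurry z ⬝ᵥ uncurry w = z 0 ⬝ᵥ w 0 + z 1 ⬝ᵥ w 1 + z 2 ⬝ᵥ w 2 + z 3 ⬝ᵥ w 3 := by
  simp [dotProduct, Fintype.sum_prod_type, Fin.sum_univ_four]

lemma qOf_add (z w : Fin 4 → Fin N → ℝ) : qOf A (z + w) = qOf A z + qOf A w := by
  simp only [qOf, Pi.add_apply, add_sub_add_comm, mulVec_add]
  abel

lemma mulVec_qOf (hA : IsUnit A.det) (z : Fin 4 → Fin N → ℝ) :
    A *ᵥ qOf A z = A *ᵥ (z 0 - z 1) + (z 2 - z 3) := by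
  rw [qOf, mulVec_add, mulVec_mulVec, mul_nonsing_inv A hA, one_mulVec]

/-- The map `q ↦ (A q, -A q, q, -q)` is the transpose of `A ∘ qOf A`. -/
lemma uncurry_dotProduct_eq_qOf_dotProduct (hA : A.PosDef) (z : Fin 4 → Fin N → ℝ)
    (q : Fin N → ℝ) :
    uncurry z ⬝ᵥ uncurry ![A *ᵥ q, -(A *ᵥ q), q, -q] = qOf A z ⬝ᵥ A *ᵥ q := by
  have hsymm : A.IsSymm := isHermitian_iff_isSymm.1 hA.1
  rw [dotProduct_mulVec_comm_of_isSymm hsymm,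
    mulVec_qOf ((isUnit_iff_isUnit_det A).mp hA.isUnit), dotProduct_add,
    dotProduct_mulVec_comm_of_isSymm hsymm q, dotProduct_comm q, uncurry_dotProduct_uncurry]
  simp only [cons_val, dotProduct_neg, sub_dotProduct]
  ring

lemma lagrangian_add (z w : Fin 4 → Fin N → ℝ) (q : Fin N → ℝ) :
    lagrangian A d vmin vmax qmin qmax (z + w) q = lagrangian A d vmin vmax qmin qmax z q +
      uncurry w ⬝ᵥ uncurry (constraintResidual A d vmin vmax qmin qmax q) := by
  rw [lagrangian, lagrangian, add_assoc, ← add_dotProduct]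
  rfl

lemma lagrangian_eq_add_sq (hA : A.PosDef) (z : Fin 4 → Fin N → ℝ) (q : Fin N → ℝ) :
    lagrangian A d vmin vmax qmin qmax z q = lagrangian A d vmin vmax qmin qmax z (qOf A z) +
      1 / 2 * ((q - qOf A z) ⬝ᵥ A *ᵥ (q - qOf A z)) := by
  have hsymm : A.IsSymm := isHermitian_iff_isSymm.1 hA.1
  have hresidual : ∀ x, uncurry z ⬝ᵥ uncurry (constraintResidual A d vmin vmax qmin qmax x) =
      uncurry z ⬝ᵥ uncurry (constraintResidual A d vmin vmax qmin qmax 0) -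
        qOf A z ⬝ᵥ A *ᵥ x := by
    intro x
    rw [← uncurry_dotProduct_eq_qOf_dotProduct hA]
    simp only [uncurry_dotProduct_uncurry, constraintResidual, volt, cons_val, mulVec_zero,
      dotProduct_sub, dotProduct_add, dotProduct_neg, dotProduct_zero]
    ring
  rw [lagrangian, lagrangian, hresidual q, hresidual (qOf A z)]
  simp only [mulVec_sub, dotProduct_sub, sub_dotProduct]
  rw [dotProduct_mulVec_comm_of_isSymm hsymm q (qOf A z)]
  ring

lemma isLeast_range_lagrangian (hA : A.PosDef) (z : Fin 4 → Fin N → ℝ) :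
    IsLeast (Set.range (lagrangian A d vmin vmax qmin qmax z))
      (lagrangian A d vmin vmax qmin qmax z (qOf A z)) := by
  refine ⟨⟨_, rfl⟩, ?_⟩
  rintro _ ⟨q, rfl⟩
  rw [lagrangian_eq_add_sq hA z q, le_add_iff_nonneg_right]
  have hsq := hA.posSemidef.dotProduct_mulVec_nonneg (q - qOf A z)
  rw [star_trivial] at hsq
  positivity

lemma dualFun_eq_lagrangian_qOf (hA : A.PosDef) (z : Fin 4 → Fin N → ℝ) :
    dualFun A d vmin vmax qmin qmax z = lagrangian A d vmin vmax qmin qmax z (qOf A z) := by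
  rw [← (isLeast_range_lagrangian hA z).csInf_eq]
  refine iInf_congr fun q => ?_
  simp only [lagrangian, uncurry_dotProduct_uncurry, ← add_assoc]
  rfl

lemma dualFun_zero (hA : A.PosDef) : dualFun A d vmin vmax qmin qmax 0 = 0 := by
  rw [dualFun_eq_lagrangian_qOf hA]
  simp [lagrangian, qOf, uncurry_dotProduct_uncurry]

lemma dualFun_le_of_feasible (hA : A.PosDef) {z : Fin 4 → Fin N → ℝ} (hz : 0 ≤ z)
    {q : Fin N → ℝ} (hq : ∀ b i, constraintResidual A d vmin vmax qmin qmax q b i ≤ 0) :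
    dualFun A d vmin vmax qmin qmax z ≤ 1 / 2 * (q ⬝ᵥ A *ᵥ q) := by
  have hpairing : uncurry z ⬝ᵥ uncurry (constraintResidual A d vmin vmax qmin qmax q) ≤ 0 :=
    Finset.sum_nonpos fun p _ => mul_nonpos_of_nonneg_of_nonpos (hz p.1 p.2) (hq p.1 p.2)
  calc dualFun A d vmin vmax qmin qmax z
      = lagrangian A d vmin vmax qmin qmax z (qOf A z) := dualFun_eq_lagrangian_qOf hA z
    _ ≤ lagrangian A d vmin vmax qmin qmax z q := (isLeast_range_lagrangian hA z).2 ⟨q, rfl⟩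
    _ ≤ 1 / 2 * (q ⬝ᵥ A *ᵥ q) := add_le_of_nonpos_right hpairing

lemma dualFun_add (hA : A.PosDef) (z w : Fin 4 → Fin N → ℝ) :
    dualFun A d vmin vmax qmin qmax (z + w) = dualFun A d vmin vmax qmin qmax z +
      uncurry w ⬝ᵥ uncurry (gradD A d vmin vmax qmin qmax z) -
        1 / 2 * (qOf A w ⬝ᵥ A *ᵥ qOf A w) := by
  have hsq := lagrangian_eq_add_sq (d := d) (vmin := vmin) (vmax := vmax) (qmin := qmin)
    (qmax := qmax) hA (z + w) (qOf A z)
  rw [qOf_add, sub_add_cancel_left, mulVec_neg, neg_dotProduct_neg, lagrangian_add,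
    ← qOf_add, ← dualFun_eq_lagrangian_qOf hA, ← dualFun_eq_lagrangian_qOf hA] at hsq
  exact eq_sub_of_add_eq hsq.symm

lemma qOf_dotProduct_mulVec_qOf_le (hA : A.PosDef) {L : ℝ} (hL0 : 0 < L)
    (hL : ∀ i, 2 * (hA.1.eigenvalues i + (hA.1.eigenvalues i)⁻¹) ≤ L)
    (w : Fin 4 → Fin N → ℝ) :
    qOf A w ⬝ᵥ A *ᵥ qOf A w ≤ L * (uncurry w ⬝ᵥ uncurry w) := by
  set q := qOf A w
  set c : Fin 4 × Fin N → ℝ := uncurry ![A *ᵥ q, -(A *ᵥ q), q, -q] with hc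
  have hwc : uncurry w ⬝ᵥ c = q ⬝ᵥ A *ᵥ q := uncurry_dotProduct_eq_qOf_dotProduct hA w q
  have hcc : c ⬝ᵥ c ≤ L * (q ⬝ᵥ A *ᵥ q) := by
    refine le_trans (le_of_eq ?_) (two_mul_dotProduct_self_add_le hA hL q)
    simp only [hc, uncurry_dotProduct_uncurry, cons_val, neg_dotProduct_neg]
    ring
  have hsq : 0 ≤ (L • uncurry w - c) ⬝ᵥ (L • uncurry w - c) :=
    Finset.sum_nonneg fun p _ => mul_self_nonneg _
  simp only [dotProduct_sub, sub_dotProduct, dotProduct_smul, smul_dotProduct, smul_eq_mul,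
    dotProduct_comm c, hwc] at hsq
  exact le_of_mul_le_mul_left (by linarith) hL0

lemma le_dualFun_add (hA : A.PosDef) {L : ℝ} (hL0 : 0 < L)
    (hL : ∀ i, 2 * (hA.1.eigenvalues i + (hA.1.eigenvalues i)⁻¹) ≤ L)
    (z w : Fin 4 → Fin N → ℝ) :
    dualFun A d vmin vmax qmin qmax z +
        (uncurry w ⬝ᵥ uncurry (gradD A d vmin vmax qmin qmax z) -
          L / 2 * (uncurry w ⬝ᵥ uncurry w)) ≤
      dualFun A d vmin vmax qmin qmax (z + w) := by
  rw [dualFun_add hA]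
  linarith [qOf_dotProduct_mulVec_qOf_le hA hL0 hL w]

end Dual

section ProjectedStep

lemma sq_max_add_sub_le {R : Type*} [CommRing R] [LinearOrder R]
    [IsStrictOrderedRing R] {z h : R} (hz : 0 ≤ z) :
    (max (z + h) 0 - z) ^ 2 ≤ (max (z + h) 0 - z) * h := by
  rcases le_total 0 (z + h) with hzh | hzh
  · rw [max_eq_left hzh, add_sub_cancel_left, sq]
  · rw [max_eq_right hzh]
    nlinarith

/-- The increase of the quadratic lower model of an `L`-smooth function along a coordinate with
partial derivative `g`, under the displacement `δ`. -/
def modelGain (L g δ : ℝ) : ℝ := δ * g - L / 2 * δ ^ 2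

variable {L z g β ρ : ℝ}

lemma modelGain_gradient_nonneg (hL : 0 < L) (hz : 0 ≤ z) :
    0 ≤ modelGain L g (max (z + 1 / L * g) 0 - z) := by
  set δ := max (z + 1 / L * g) 0 - z
  have hproj : δ ^ 2 ≤ δ * (1 / L * g) := sq_max_add_sub_le hz
  calc 0 ≤ L / 2 * δ ^ 2 := by positivity
    _ = L * δ ^ 2 - L / 2 * δ ^ 2 := by ring
    _ ≤ L * (δ * (1 / L * g)) - L / 2 * δ ^ 2 := by gcongr
    _ = modelGain L g δ := by rw [modelGain]; field_simp

lemma le_modelGain_gradient (hL : 0 < L) (hz : 0 ≤ z) (hρ : 0 ≤ ρ) (hg : ρ ≤ g) :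
    ρ ^ 2 / (2 * L) ≤ modelGain L g (max (z + 1 / L * g) 0 - z) := by
  have hg0 : 0 ≤ g := hρ.trans hg
  rw [max_eq_left (by positivity), add_sub_cancel_left]
  calc ρ ^ 2 / (2 * L) ≤ g ^ 2 / (2 * L) := by gcongr
    _ = modelGain L g (1 / L * g) := by rw [modelGain]; field_simp; ring

lemma le_modelGain_sign_of_le (hz : 0 ≤ z) (hβ : 0 ≤ β) (hρ : 0 ≤ ρ) (hg : ρ ≤ g) :
    ρ * β - L / 2 * β ^ 2 ≤ modelGain L g (max (z + β * sgn g) 0 - z) := by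
  rw [sgn, if_pos (hρ.trans hg), mul_one, max_eq_left (by positivity), add_sub_cancel_left,
    modelGain, mul_comm ρ]
  gcongr

lemma neg_le_modelGain_sign (hL : 0 ≤ L) (hz : 0 ≤ z) (hβ : 0 ≤ β) :
    -(L / 2 * β ^ 2) ≤ modelGain L g (max (z + β * sgn g) 0 - z) := by
  rcases le_or_gt 0 g with hg | hg
  · simpa using le_modelGain_sign_of_le (L := L) hz hβ le_rfl hg
  · have hneg : max (z + β * sgn g) 0 - z ≤ 0 := by
      rw [sgn, if_neg hg.not_ge]
      exact sub_nonpos.2 (max_le (by linarith) hz)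
    have hsq : (max (z + β * sgn g) 0 - z) ^ 2 ≤ β ^ 2 := by
      refine sq_le_sq' ?_ (hneg.trans hβ)
      rw [sgn, if_neg hg.not_ge]
      linarith [le_max_left (z + β * -1) 0]
    rw [modelGain]
    linarith [mul_nonneg_of_nonpos_of_nonpos hneg hg.le,
      mul_le_mul_of_nonneg_left hsq (div_nonneg hL zero_le_two)]

lemma le_dotProduct_sub_of_mixed_step {κ : Type*} [Fintype κ] [DecidableEq κ] {s : Finset κ}
    {z z' g : κ → ℝ} (hL : 0 < L) (hβ : 0 ≤ β) (hρ : 0 ≤ ρ) (hz : 0 ≤ z)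
    (hgrad : ∀ k ∈ s, z' k = max (z k + 1 / L * g k) 0)
    (hsign : ∀ k ∉ s, z' k = max (z k + β * sgn (g k)) 0) {k₀ : κ} (hk₀ : ρ ≤ g k₀) :
    min (ρ ^ 2 / (2 * L)) (ρ * β) - sᶜ.card * (L / 2 * β ^ 2) ≤
      (z' - z) ⬝ᵥ g - L / 2 * ((z' - z) ⬝ᵥ (z' - z)) := by
  set loss : κ → ℝ := fun k => if k ∈ s then 0 else L / 2 * β ^ 2 with hloss
  set gain : κ → ℝ := fun k => modelGain L (g k) (z' k - z k) with hgain
  have hnonneg : ∀ k, 0 ≤ gain k + loss k := by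
    intro k
    by_cases hk : k ∈ s
    · simpa [hgain, hloss, hk, hgrad k hk] using modelGain_gradient_nonneg hL (hz k)
    · simpa [hgain, hloss, hk, hsign k hk, neg_le_iff_add_nonneg] using
        neg_le_modelGain_sign hL.le (hz k) hβ
  have hviolated : min (ρ ^ 2 / (2 * L)) (ρ * β) ≤ gain k₀ + loss k₀ := by
    by_cases hk : k₀ ∈ s
    · refine (min_le_left _ _).trans ?_
      simpa [hgain, hloss, hk, hgrad k₀ hk] using le_modelGain_gradient hL (hz k₀) hρ hk₀
    · refine (min_le_right _ _).trans ?_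
      simpa [hgain, hloss, hk, hsign k₀ hk] using le_modelGain_sign_of_le (hz k₀) hβ hρ hk₀
  have hsum : min (ρ ^ 2 / (2 * L)) (ρ * β) ≤ ∑ k, (gain k + loss k) :=
    hviolated.trans <| Finset.single_le_sum (f := fun k => gain k + loss k)
      (fun k _ => hnonneg k) (Finset.mem_univ k₀)
  have hlosses : ∑ k, loss k = sᶜ.card * (L / 2 * β ^ 2) := by
    simp [hloss, Finset.sum_ite, Finset.compl_eq_univ_sdiff, Finset.filter_notMem_eq_sdiff]
  have hgains : ∑ k, gain k = (z' - z) ⬝ᵥ g - L / 2 * ((z' - z) ⬝ᵥ (z' - z)) := by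
    simp only [hgain, modelGain, Finset.sum_sub_distrib, Finset.mul_sum, dotProduct,
      Pi.sub_apply, sq]
  rw [Finset.sum_add_distrib, hlosses, hgains] at hsum
  linarith

end ProjectedStep

section Iteration

open Function

lemma exists_le_ceil_of_add_le {R : Type*} [Field R] [LinearOrder R] [IsStrictOrderedRing R]
    [FloorSemiring R] {f : ℕ → R} {P : ℕ → Prop} {δ M : R} (hδ : 0 < δ)
    (hstep : ∀ t, ¬ P t → f t + δ ≤ f (t + 1)) (hM : ∀ t, f t ≤ M) :
    ∃ T ≤ ⌈(M - f 0) / δ⌉₊, P T := by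
  by_contra! hnot
  have hgrow : ∀ t ≤ ⌈(M - f 0) / δ⌉₊ + 1, f 0 + t * δ ≤ f t := by
    intro t
    induction t with
    | zero => simp
    | succ t ih =>
      intro ht
      have hle := (add_le_add_left (ih (by lia)) δ).trans (hstep t (hnot t (by lia)))
      push_cast
      linarith
  have hlast := (hgrow _ le_rfl).trans (hM _)
  have hceil := (div_le_iff₀ hδ).mp (Nat.le_ceil ((M - f 0) / δ))
  push_cast at hlast
  linarith

variable {N : ℕ} {A : Matrix (Fin N) (Fin N) ℝ} {d vmin vmax qmin qmax : Fin N → ℝ}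
  {L β ρ : ℝ}

/-- One step of the VC-LB iteration: projected gradient ascent with step size `α` on the voltage
multipliers (blocks `0` and `1`), projected sign ascent with step size `β` on the others. -/
def vcLbStep (A : Matrix (Fin N) (Fin N) ℝ) (d vmin vmax qmin qmax : Fin N → ℝ) (α β : ℝ)
    (z : Fin 4 → Fin N → ℝ) : Fin 4 → Fin N → ℝ := fun b i =>
  max (z b i + (if (b : ℕ) < 2 then α * gradD A d vmin vmax qmin qmax z b i
    else β * sgn (gradD A d vmin vmax qmin qmax z b i))) 0

lemma le_dualFun_vcLbStep (hA : A.PosDef) (hL0 : 0 < L)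
    (hL : ∀ i, 2 * (hA.1.eigenvalues i + (hA.1.eigenvalues i)⁻¹) ≤ L) (hβ : 0 ≤ β) (hρ : 0 ≤ ρ)
    {z : Fin 4 → Fin N → ℝ} (hz : 0 ≤ z) {b : Fin 4} {i : Fin N}
    (hviol : ρ ≤ gradD A d vmin vmax qmin qmax z b i) :
    dualFun A d vmin vmax qmin qmax z +
        (min (ρ ^ 2 / (2 * L)) (ρ * β) - 2 * N * (L / 2 * β ^ 2)) ≤
      dualFun A d vmin vmax qmin qmax (vcLbStep A d vmin vmax qmin qmax (1 / L) β z) := by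
  set z' := vcLbStep A d vmin vmax qmin qmax (1 / L) β z with hz'
  set voltageBlocks : Finset (Fin 4 × Fin N) := {0, 1} ×ˢ Finset.univ with hblocks
  have hmem : ∀ p, p ∈ voltageBlocks ↔ (p.1 : ℕ) < 2 := by
    rintro ⟨b, i⟩
    fin_cases b <;> simp [hblocks]
  have hcard : (voltageBlocksᶜ.card : ℝ) = 2 * N := by
    rw [Finset.card_compl, hblocks, Finset.card_product]
    simp only [Fintype.card_prod, Fintype.card_fin, Finset.card_univ]
    norm_num [← Nat.sub_mul]
  have hmodel := le_dotProduct_sub_of_mixed_step (s := voltageBlocks) (z := uncurry z)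
    (z' := uncurry z') (g := uncurry (gradD A d vmin vmax qmin qmax z)) (k₀ := (b, i))
    hL0 hβ hρ (fun p => hz p.1 p.2) (fun p hp => by simp [hz', uncurry, vcLbStep, (hmem p).1 hp])
    (fun p hp => by simp [hz', uncurry, vcLbStep, (hmem p).not.1 hp]) hviol
  rw [hcard] at hmodel
  have hsmooth := le_dualFun_add (d := d) (vmin := vmin) (vmax := vmax) (qmin := qmin)
    (qmax := qmax) hA hL0 hL z (z' - z)
  rw [add_sub_cancel] at hsmooth
  exact (add_le_add_right hmodel _).trans hsmooth

theorem exists_forall_gradD_le_of_feasible (hA : A.PosDef) (hL0 : 0 < L)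
    (hL : ∀ i, 2 * (hA.1.eigenvalues i + (hA.1.eigenvalues i)⁻¹) ≤ L) (hβ : 0 ≤ β) (hρ : 0 ≤ ρ)
    {δ : ℝ} (hδ : 0 < δ)
    (hgain : δ ≤ min (ρ ^ 2 / (2 * L)) (ρ * β) - 2 * N * (L / 2 * β ^ 2))
    {q : Fin N → ℝ} (hq : ∀ b i, constraintResidual A d vmin vmax qmin qmax q b i ≤ 0)
    {z : ℕ → Fin 4 → Fin N → ℝ} (hz0 : z 0 = 0)
    (hstep : ∀ t, z (t + 1) = vcLbStep A d vmin vmax qmin qmax (1 / L) β (z t)) :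
    ∃ T ≤ ⌈1 / 2 * (q ⬝ᵥ A *ᵥ q) / δ⌉₊,
      ∀ b i, gradD A d vmin vmax qmin qmax (z T) b i ≤ ρ := by
  have hnonneg : ∀ t, 0 ≤ z t
    | 0 => hz0.ge
    | t + 1 => hstep t ▸ fun _ _ => le_max_right _ _
  have hascent : ∀ t, (¬ ∀ b i, gradD A d vmin vmax qmin qmax (z t) b i ≤ ρ) →
      dualFun A d vmin vmax qmin qmax (z t) + δ ≤
        dualFun A d vmin vmax qmin qmax (z (t + 1)) := by
    intro t hviol
    push Not at hviol
    obtain ⟨b, i, hbi⟩ := hviol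
    rw [hstep]
    exact (add_le_add_right hgain _).trans
      (le_dualFun_vcLbStep hA hL0 hL hβ hρ (hnonneg t) hbi.le)
  simpa only [hz0, dualFun_zero hA, sub_zero] using
    exists_le_ceil_of_add_le hδ hascent fun t => dualFun_le_of_feasible hA (hnonneg t) hq

end Iteration

lemma div_le_gain_of_stepSize {x L ρ β : ℝ} (hx : 1 ≤ x) (hL : 0 < L)
    (hβ : β = ρ / (4 * x ^ ((3 : ℝ) / 2) * L)) :
    ρ ^ 2 / (32 * x ^ 2 * L) ≤
      min (ρ ^ 2 / (2 * L)) (ρ * β) - 2 * x * (L / 2 * β ^ 2) := by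
  have hx0 : 0 < x := by positivity
  set r := x ^ ((3 : ℝ) / 2) with hr
  have hr1 : 1 ≤ r := Real.one_le_rpow hx (by norm_num)
  have hr_sq : r ^ 2 = x ^ 3 := by
    rw [hr, ← Real.rpow_mul_natCast hx0.le, ← Real.rpow_natCast]
    norm_num
  have hr_le : r ≤ x ^ 2 := by
    rw [hr, ← Real.rpow_natCast]
    exact Real.rpow_le_rpow_of_exponent_le hx (by norm_num)
  have hloss : 2 * x * (L / 2 * β ^ 2) = ρ ^ 2 / (16 * x ^ 2 * L) := by
    rw [hβ, div_pow, mul_pow, mul_pow, hr_sq]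
    field_simp
    norm_num
  have hsign : ρ * β = ρ ^ 2 / (4 * r * L) := by
    rw [hβ]
    ring
  have hmin : ρ ^ 2 / (4 * x ^ 2 * L) ≤ min (ρ ^ 2 / (2 * L)) (ρ * β) := by
    rw [hsign]
    refine le_min ?_ (by gcongr)
    gcongr
    nlinarith
  calc ρ ^ 2 / (32 * x ^ 2 * L)
      ≤ ρ ^ 2 / (4 * x ^ 2 * L) - ρ ^ 2 / (16 * x ^ 2 * L) := by
        have hnonneg : 0 ≤ ρ ^ 2 / (x ^ 2 * L) := by positivity
        have hsplit : ∀ c : ℝ, ρ ^ 2 / (c * x ^ 2 * L) = ρ ^ 2 / (x ^ 2 * L) / c := by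
          intro c
          rw [div_div, mul_comm _ c, mul_assoc]
        rw [hsplit, hsplit, hsplit]
        linarith
    _ ≤ _ := by
        rw [hloss]
        gcongr

lemma sq_le_of_mem_Icc {R : Type*} [Field R] [LinearOrder R] [IsStrictOrderedRing R]
    {a b x Q : R} (hx : x ∈ Set.Icc a b) (ha : a ^ 2 ≤ Q) (hb : b ^ 2 ≤ Q) : x ^ 2 ≤ Q :=
  have hconvex : ConvexOn R Set.univ fun y : R => y ^ 2 := even_two.convexOn_pow
  (hconvex.le_max_of_mem_Icc trivial trivial hx).trans (max_le ha hb)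

lemma fes_eq_zero_of_feasible {N : ℕ} {A : Matrix (Fin N) (Fin N) ℝ}
    {d vmin vmax qmin qmax q : Fin N → ℝ}
    (hq : ∀ i, qmin i ≤ q i ∧ q i ≤ qmax i)
    (hv : ∀ i, vmin i ≤ volt A d q i ∧ volt A d q i ≤ vmax i) :
    fes A d vmin vmax qmin qmax q = 0 := by
  refine IsLeast.csInf_eq ⟨⟨q, volt A d q, hq, hv, by simp⟩, ?_⟩
  rintro _ ⟨y1, y2, -, -, rfl⟩
  exact Real.sqrt_nonneg _

/-- Corollary (exact solution): let ρ > 0 and suppose the restricted problem with bounds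
[q^min + ρ1, q^max − ρ1], [v^min + ρ1, v^max − ρ1] is feasible.  Running VC-LB for the
restricted problem with α = 1/L and β = ρ/(4N^{3/2}L), there is
T ≤ ⌈16N³LQλ_max(A)/ρ²⌉ such that q(z(T)) is an exact solution of the original voltage
regulation problem, i.e. fes(q(z(T))) = 0. -/
theorem stmt_12 (N : ℕ) (hN : 0 < N) (A : Matrix (Fin N) (Fin N) ℝ) (hA : A.PosDef)
    (d vmin vmax qmin qmax : Fin N → ℝ)
    (hv : ∀ i, vmin i ≤ vmax i) (hq : ∀ i, qmin i ≤ qmax i)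
    (ρ : ℝ) (hρ : 0 < ρ)
    (hfeas : ∃ q : Fin N → ℝ,
      (∀ i, qmin i + ρ ≤ q i ∧ q i ≤ qmax i - ρ) ∧
      ∀ i, vmin i + ρ ≤ volt A d q i ∧ volt A d q i ≤ vmax i - ρ)
    (L : ℝ)
    (hL : IsGreatest
      (Set.range fun i : Fin N => 2 * (hA.1.eigenvalues i + (hA.1.eigenvalues i)⁻¹)) L)
    (Q : ℝ)
    (hQ : IsGreatest
      ((Set.range fun i : Fin N => qmin i ^ 2) ∪ Set.range fun i : Fin N => qmax i ^ 2) Q)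
    (lmax : ℝ) (hlmax : IsGreatest (Set.range hA.1.eigenvalues) lmax)
    (α β : ℝ) (hα : α = 1 / L) (hβ : β = ρ / (4 * (N : ℝ) ^ ((3 : ℝ) / 2) * L))
    (ziter : ℕ → Fin 4 → Fin N → ℝ) (hz0 : ziter 0 = 0)
    (hstep : ∀ t b i, ziter (t + 1) b i =
      max (ziter t b i
        + (if (b : ℕ) < 2 then
            α * gradD A d (fun i => vmin i + ρ) (fun i => vmax i - ρ)
              (fun i => qmin i + ρ) (fun i => qmax i - ρ) (ziter t) b i
          else
            β * sgn (gradD A d (fun i => vmin i + ρ) (fun i => vmax i - ρ)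
              (fun i => qmin i + ρ) (fun i => qmax i - ρ) (ziter t) b i))) 0) :
    ∃ T : ℕ,
      T ≤ ⌈16 * (N : ℝ) ^ 3 * L * Q * lmax / ρ ^ 2⌉₊ ∧
      (∀ i, qmin i ≤ qOf A (ziter T) i ∧ qOf A (ziter T) i ≤ qmax i) ∧
      (∀ i, vmin i ≤ volt A d (qOf A (ziter T)) i ∧ volt A d (qOf A (ziter T)) i ≤ vmax i) ∧
      fes A d vmin vmax qmin qmax (qOf A (ziter T)) = 0 := by
  have hN1 : (1 : ℝ) ≤ N := by exact_mod_cast hN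
  have hpos := hA.eigenvalues_pos ⟨0, hN⟩
  have hL' : ∀ i, 2 * (hA.1.eigenvalues i + (hA.1.eigenvalues i)⁻¹) ≤ L := fun i => hL.2 ⟨i, rfl⟩
  have hL0 : 0 < L := lt_of_lt_of_le (by positivity) (hL' ⟨0, hN⟩)
  have hlmax' : ∀ i, hA.1.eigenvalues i ≤ lmax := fun i => hlmax.2 ⟨i, rfl⟩
  obtain ⟨q, hqb, hvb⟩ := hfeas
  have hqQ : ∀ i, q i ^ 2 ≤ Q := fun i =>
    sq_le_of_mem_Icc (a := qmin i) (b := qmax i)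
      ⟨by linarith [(hqb i).1], by linarith [(hqb i).2]⟩
      (hQ.2 (.inl ⟨i, rfl⟩)) (hQ.2 (.inr ⟨i, rfl⟩))
  have henergy : q ⬝ᵥ A *ᵥ q ≤ lmax * (N * Q) := by
    simpa using dotProduct_mulVec_le_card_mul hA.1 hlmax' (hpos.le.trans (hlmax' _)) hqQ
  have hfeasible : ∀ b i, constraintResidual A d (fun i => vmin i + ρ) (fun i => vmax i - ρ)
      (fun i => qmin i + ρ) (fun i => qmax i - ρ) q b i ≤ 0 :=
    constraintResidual_le_iff.2 (by simpa using ⟨hqb, hvb⟩)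
  obtain ⟨T, hT, hgrad⟩ := exists_forall_gradD_le_of_feasible hA hL0 hL' (by rw [hβ]; positivity)
    hρ.le (by positivity) (div_le_gain_of_stepSize hN1 hL0 hβ) hfeasible hz0
    fun t => funext₂ (hα ▸ hstep t)
  obtain ⟨hqT, hvT⟩ := constraintResidual_le_iff.1 hgrad
  simp only [add_sub_cancel_right, sub_add_cancel] at hqT hvT
  refine ⟨T, hT.trans (Nat.ceil_mono ?_), hqT, hvT, fes_eq_zero_of_feasible hqT hvT⟩
  calc 1 / 2 * (q ⬝ᵥ A *ᵥ q) / (ρ ^ 2 / (32 * N ^ 2 * L))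
      ≤ 1 / 2 * (lmax * (N * Q)) / (ρ ^ 2 / (32 * N ^ 2 * L)) := by gcongr
    _ = 16 * N ^ 3 * L * Q * lmax / ρ ^ 2 := by field_simp; ring

end
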